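/- Let A be an algebra, τ an automorphism of A, δ a τ-derivation with τδ = q^s δτ for a nonzero integer s, where q acts as a primitive l-th root of unity ε with gcd(l,s)=1, and suppose δ is locally nilpotent. Then in the Ore extension R = A[x; τ, δ] specialized at q = ε, the element x^l satisfies x^l a = τ^l(a) x^l + (terms involving δ), and if moreover δ^l = 0 on the relevant elements and τ^l = id, then x^l is central in R_ε. (Special case: the l-th power of a q-skew generator lies in the center at an admissible root of unity.) -/

import Mathlib

open Finset

/-- The coefficients of the expansion of `z ^ m` in the Newton basis with nodes `N`. -/
def newtonCoeff {K : Type*} [CommRing K] (N : ℕ → K) : ℕ → ℕ → K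
  | 0, 0 => 1
  | 0, _ + 1 => 0
  | m + 1, 0 => newtonCoeff N m 0 * N 0
  | m + 1, k + 1 => newtonCoeff N m (k + 1) * N (k + 1) + newtonCoeff N m k

section NewtonCoeff

variable {K : Type*} [CommRing K] (N : ℕ → K)

theorem newtonCoeff_eq_zero_of_lt : ∀ {m k : ℕ}, m < k → newtonCoeff N m k = 0
  | 0, k + 1, _ => by simp [newtonCoeff]
  | m + 1, k + 1, h => by
    simp [newtonCoeff, newtonCoeff_eq_zero_of_lt (show m < k + 1 by omega),
      newtonCoeff_eq_zero_of_lt (show m < k by omega)]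

theorem newtonCoeff_self : ∀ m : ℕ, newtonCoeff N m m = 1
  | 0 => by simp [newtonCoeff]
  | m + 1 => by
    simp [newtonCoeff, newtonCoeff_eq_zero_of_lt N (Nat.lt_succ_self m), newtonCoeff_self m]

theorem newtonCoeff_zero_right (h : N 0 = 1) : ∀ m : ℕ, newtonCoeff N m 0 = 1
  | 0 => by simp [newtonCoeff]
  | m + 1 => by simp [newtonCoeff, newtonCoeff_zero_right h m, h]

theorem map_newtonCoeff {K' : Type*} [CommRing K'] (φ : K →+* K') :
    ∀ m k : ℕ, φ (newtonCoeff N m k) = newtonCoeff (fun j => φ (N j)) m k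
  | 0, 0 => by simp [newtonCoeff]
  | 0, k + 1 => by simp [newtonCoeff]
  | m + 1, 0 => by simp [newtonCoeff, map_newtonCoeff φ m 0]
  | m + 1, k + 1 => by simp [newtonCoeff, map_newtonCoeff φ m k, map_newtonCoeff φ m (k + 1)]

theorem sum_newtonCoeff_succ {M : Type*} [AddCommGroup M] [Module K M] (g : ℕ → M) (m : ℕ) :
    ∑ k ∈ range (m + 2), newtonCoeff N (m + 1) k • g k =
      ∑ k ∈ range (m + 1), newtonCoeff N m k • (N k • g k + g (k + 1)) := by
  rw [sum_range_succ']
  simp only [newtonCoeff, add_smul, smul_add, mul_smul, sum_add_distrib]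
  rw [sum_range_succ (fun k => newtonCoeff N m (k + 1) • N (k + 1) • g (k + 1)),
    newtonCoeff_eq_zero_of_lt N (Nat.lt_succ_self m),
    sum_range_succ' (fun k => newtonCoeff N m k • N k • g k)]
  simp only [zero_smul, add_zero]
  abel

theorem pow_eq_sum_newtonCoeff (z : K) (m : ℕ) :
    z ^ m = ∑ k ∈ range (m + 1), newtonCoeff N m k * ∏ j ∈ range k, (z - N j) := by
  induction m with
  | zero => simp [newtonCoeff]
  | succ m ih =>
    have h := sum_newtonCoeff_succ N (fun k => ∏ j ∈ range k, (z - N j)) m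
    simp only [smul_eq_mul] at h
    rw [h, pow_succ, ih, sum_mul]
    refine sum_congr rfl fun k _ => ?_
    rw [prod_range_succ]
    ring

/-- If the nodes are distinct `l`-th roots of unity, then `z ^ l` interpolates to a constant. -/
theorem newtonCoeff_eq_zero_of_injOn [IsDomain K] {l : ℕ} (hN : ∀ j, N j ^ l = 1)
    (h0 : N 0 = 1) (hinj : Set.InjOn N (Set.Iio l)) {k : ℕ} (hk : 0 < k) (hkl : k < l) :
    newtonCoeff N l k = 0 := by
  induction k using Nat.strong_induction_on with
  | _ k ih =>
    have h := pow_eq_sum_newtonCoeff N (N k) l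
    rw [hN, sum_eq_add_of_mem 0 k (by simp) (by simp; omega) hk.ne] at h
    · simp only [newtonCoeff_zero_right N h0, range_zero, prod_empty, mul_one, left_eq_add,
        mul_eq_zero, prod_eq_zero_iff, mem_range, sub_eq_zero] at h
      refine h.resolve_right ?_
      rintro ⟨j, hj, hjk⟩
      exact hj.ne' (hinj hkl (hj.trans hkl) hjk)
    · rintro j - ⟨hj0, hjk⟩
      rcases lt_or_gt_of_ne hjk with hjk | hjk
      · rw [ih j hjk (Nat.pos_of_ne_zero hj0) (hjk.trans hkl), zero_mul]
      · rw [prod_eq_zero (mem_range.2 hjk) (sub_self _), mul_zero]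

end NewtonCoeff

theorem newtonCoeff_pow_eq_zero {K : Type*} [CommRing K] [IsDomain K] {q : K} {l : ℕ}
    (hq : IsPrimitiveRoot q l) {k : ℕ} (hk : 0 < k) (hkl : k < l) :
    newtonCoeff (fun j => q ^ j) l k = 0 :=
  newtonCoeff_eq_zero_of_injOn _ (fun j => by rw [← pow_mul, mul_comm, pow_mul, hq.pow_eq_one,
    one_pow]) (pow_zero q) (fun _ hi _ hj h => hq.pow_inj hi hj h) hk hkl

/-- The binomial theorem at a root of unity for `q`-commuting elements. -/
theorem add_pow_of_qCommute {K R : Type*} [CommRing K] [IsDomain K] [Ring R] [Algebra K R] {q : K}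
    {l : ℕ} (hl : 0 < l) (hq : IsPrimitiveRoot q l) {d y : R} (h : y * d = q • (d * y)) :
    (d + y) ^ l = d ^ l + y ^ l := by
  have hy : ∀ k, y ^ k * d = q ^ k • (d * y ^ k) := by
    intro k
    induction k with
    | zero => simp
    | succ k ih =>
      rw [pow_succ' y, mul_assoc, ih, mul_smul_comm, ← mul_assoc, h, smul_mul_assoc, smul_smul,
        pow_succ, mul_assoc]
  have key : ∀ m, (d + y) ^ m =
      ∑ k ∈ range (m + 1), newtonCoeff (fun j => q ^ j) m k • (d ^ (m - k) * y ^ k) := by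
    intro m
    induction m with
    | zero => simp [newtonCoeff]
    | succ m ih =>
      rw [sum_newtonCoeff_succ, pow_succ, ih, sum_mul]
      refine sum_congr rfl fun k hk => ?_
      have hkm : k ≤ m := Nat.lt_succ_iff.1 (mem_range.1 hk)
      rw [smul_mul_assoc, mul_add, mul_assoc, mul_assoc, hy, mul_smul_comm, ← mul_assoc, ← pow_succ,
        ← pow_succ, Nat.succ_sub hkm, Nat.succ_sub_succ]
  rw [key, sum_eq_add_of_mem 0 l (by simp) (by simp) hl.ne]
  · simp [newtonCoeff_zero_right, newtonCoeff_self]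
  · rintro k hk ⟨hk0, hkl⟩
    rw [newtonCoeff_pow_eq_zero hq (Nat.pos_of_ne_zero hk0)
      (lt_of_le_of_ne (Nat.lt_succ_iff.1 (mem_range.1 hk)) hkl), zero_smul]

/-- The cocycle `W * τ W * ⋯ * τ ^ (k - 1) W`. -/
def skewProd {C : Type*} [CommRing C] (τ : C →+* C) (W : C) : ℕ → C
  | 0 => 1
  | k + 1 => W * τ (skewProd τ W k)

/-- The composite `(1 - W ^ (m - 1) τ) ⋯ (1 - W τ) (1 - τ)`. -/
def twistedDiff {C : Type*} [CommRing C] (τ : C →+* C) (W : C) : ℕ → C → C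
  | 0, a => a
  | m + 1, a => twistedDiff τ W m a - W ^ m * τ (twistedDiff τ W m a)

/-- The weighted difference operator `g ↦ (1 - shift) g * D` on sequences. -/
def weightedDiff {F : Type*} [Field F] (D : ℕ → F) : (ℕ → F) →ₗ[F] (ℕ → F) where
  toFun g j := (g j - g (j + 1)) * D j
  map_add' g h := by ext j; simp only [Pi.add_apply]; ring
  map_smul' c g := by ext j; simp only [Pi.smul_apply, smul_eq_mul, RingHom.id_apply]; ring

theorem Subalgebra.mem_of_periodic {F : Type*} [Field F] (S : Subalgebra F (ℕ → F)) (P : ℕ)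
    (hper : ∀ g ∈ S, ∀ j, g (j + P) = g j)
    (hsep : ∀ i < P, ∀ j < P, i ≠ j → ∃ g ∈ S, g i ≠ g j) (g : ℕ → F)
    (hg : ∀ j, g (j + P) = g j) (hP : 0 < P) : g ∈ S := by
  have hmod : ∀ h : ℕ → F, (∀ j, h (j + P) = h j) → ∀ j, h (j % P) = h j := fun h hh j =>
    Function.Periodic.map_mod_nat hh j
  have hind : ∀ i < P, ∃ u ∈ S, ∀ j < P, u j = if j = i then 1 else 0 := by
    intro i hi
    have hsep' : ∀ j, ∃ h ∈ S, j < P → j ≠ i → h i = 1 ∧ h j = 0 := by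
      intro j
      by_cases hj : j < P ∧ j ≠ i
      · obtain ⟨h, hS, hne⟩ := hsep i hi j hj.1 hj.2.symm
        refine ⟨(h i - h j)⁻¹ • (h - algebraMap F _ (h j)),
          S.smul_mem (S.sub_mem hS (S.algebraMap_mem _)) _, fun _ _ => ⟨?_, ?_⟩⟩
        · simp [inv_mul_cancel₀ (sub_ne_zero.2 hne)]
        · simp
      · exact ⟨0, S.zero_mem, fun h1 h2 => (hj ⟨h1, h2⟩).elim⟩
    choose h hS hh using hsep'
    refine ⟨∏ j ∈ (range P).erase i, h j, S.prod_mem fun j _ => hS j, fun j hj => ?_⟩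
    rw [Finset.prod_apply]
    split_ifs with hji
    · subst hji
      refine prod_eq_one fun k hk => ?_
      exact (hh k (mem_range.1 (mem_of_mem_erase hk)) (ne_of_mem_erase hk)).1
    · exact prod_eq_zero (mem_erase.2 ⟨hji, mem_range.2 hj⟩) (hh j hj hji).2
  choose! u hu hu' using hind
  have hsum : g = ∑ i ∈ range P, g i • u i := by
    ext j
    have hS : ∑ i ∈ range P, g i • u i ∈ S :=
      S.sum_mem fun i hi => S.smul_mem (hu i (mem_range.1 hi)) _
    rw [← hmod g hg, ← hmod _ (hper _ hS)]
    have hj := Nat.mod_lt j hP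
    rw [Finset.sum_apply, sum_eq_single_of_mem (j % P) (mem_range.2 hj)]
    · simp [hu' _ hj _ hj]
    · intro i hi hij
      simp [hu' _ (mem_range.1 hi) _ hj, hij.symm]
  rw [hsum]
  exact S.sum_mem fun i hi => S.smul_mem (hu i (mem_range.1 hi)) _

open Polynomial in
/-- If the weighted difference operator is nilpotent on `P`-periodic sequences, then
the weights over one period are all the `P`-th roots of unity. -/
theorem prod_X_sub_C_eq_of_nilpotent {F : Type*} [Field F] [IsAlgClosed F] {D : ℕ → F} {P n : ℕ}
    (hP : 0 < P) (hD : ∀ j, D (j + P) = D j) (hD0 : ∀ j, D j ≠ 0) (h0 : D 0 = 1)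
    (hnil : ∀ g : ℕ → F, (∀ j, g (j + P) = g j) → ((weightedDiff D)^[n]) g = 0) :
    ∏ j ∈ range P, (X - C (D j)) = X ^ P - 1 := by
  set G : F[X] := ∏ j ∈ range P, (X - C (D j)) with hG
  have hGmonic : G.Monic := monic_prod_of_monic _ _ fun j _ => monic_X_sub_C _
  have hGdeg : G.natDegree = P := by
    rw [hG, natDegree_prod_of_monic _ _ fun j _ => monic_X_sub_C _]; simp
  set Q : F[X] := G - C (G.eval 0) with hQ
  have hroot : ∀ z, Q.IsRoot z → z = 0 := by
    intro z hz
    have hz' : ∏ j ∈ range P, (z - D j) = ∏ j ∈ range P, (0 - D j) := by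
      simpa [hQ, hG, eval_prod, sub_eq_zero, IsRoot] using hz
    set r : ℕ → F := fun j => (D j - z) / D j with hr
    have hrper : ∀ j, r (j + P) = r j := fun j => by simp [hr, hD]
    have hr1 : ∏ j ∈ range P, r j = 1 := by
      have : ∀ j ∈ range P, r j = (z - D j) / (0 - D j) := fun j _ => by
        rw [hr, zero_sub, div_neg, ← neg_div, neg_sub]
      rw [prod_congr rfl this, prod_div_distrib, hz', div_self]
      exact prod_ne_zero_iff.2 fun j _ => by simpa using hD0 j
    set g : ℕ → F := fun j => ∏ i ∈ range j, r i with hg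
    have hgper : ∀ j, g (j + P) = g j := by
      intro j
      induction j with
      | zero => simp [hg, hr1]
      | succ j ih =>
        have e1 : g (j + 1 + P) = g (j + P) * r (j + P) := by
          rw [Nat.add_right_comm]; exact prod_range_succ _ _
        have e2 : g (j + 1) = g j * r j := prod_range_succ _ _
        rw [e1, e2, ih, hrper]
    have heig : weightedDiff D g = z • g := by
      ext j
      have e2 : g (j + 1) = g j * r j := prod_range_succ _ _
      change (g j - g (j + 1)) * D j = z * g j
      rw [e2, hr]
      field_simp [hD0 j]
      ring
    have hit : ∀ m, ((weightedDiff D)^[m]) g = z ^ m • g := by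
      intro m
      induction m with
      | zero => simp
      | succ m ih =>
        rw [Function.iterate_succ_apply', ih, map_smul, heig, smul_smul, pow_succ]
    have := congrFun (hit n) 0
    rw [hnil g hgper] at this
    have hz0 : z ^ n = 0 := by simpa [hg] using this.symm
    exact eq_zero_of_pow_eq_zero hz0
  have hdeg : (C (G.eval 0)).degree < G.degree := by
    refine lt_of_le_of_lt degree_C_le ?_
    rw [← natDegree_pos_iff_degree_pos, hGdeg]; exact hP
  have hQmonic : Q.Monic := hGmonic.sub_of_left hdeg
  have hQdeg : Q.natDegree = P := by rw [hQ, natDegree_sub_C, hGdeg]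
  have hQX : Q = X ^ P := by
    have hs := IsAlgClosed.splits Q
    rw [hs.eq_prod_roots_of_monic hQmonic]
    have hrep : Q.roots = Multiset.replicate P 0 := by
      rw [Multiset.eq_replicate]
      refine ⟨by rw [← hs.natDegree_eq_card_roots, hQdeg], fun z hz => hroot z ?_⟩
      exact isRoot_of_mem_roots hz
    rw [hrep]
    simp
  have h1 : Q.eval 1 = - G.eval 0 := by
    have : G.eval 1 = 0 := by
      rw [hG, eval_prod]
      exact prod_eq_zero (mem_range.2 hP) (by simp [h0])
    simp [hQ, this]
  rw [hQX] at h1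
  have : G.eval 0 = -1 := by rw [← neg_eq_iff_eq_neg, ← h1]; simp
  rw [this, hQX] at hQ
  rw [hQ]
  simp

section Cyclic

variable {C : Type*} [CommRing C] (τ : C →+* C) (W : C)

theorem skewProd_add (j k : ℕ) :
    skewProd τ W (j + k) = τ^[j] (skewProd τ W k) * skewProd τ W j := by
  induction j with
  | zero => simp [skewProd]
  | succ j ih =>
    rw [Nat.succ_add, skewProd, ih, skewProd, map_mul, Function.iterate_succ_apply']
    ring

theorem skewProd_pow_eq_one {l : ℕ} (hW : W ^ l = 1) : ∀ j, skewProd τ W j ^ l = 1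
  | 0 => by simp [skewProd]
  | j + 1 => by
    rw [skewProd, mul_pow, hW, ← map_pow, skewProd_pow_eq_one hW j, map_one, one_mul]

/-- Vanishing of the `l`-fold twisted difference along a character forces the values of
the cocycle to be distinct. -/
theorem injOn_skewProd_of_twistedDiff {F : Type*} [Field F] [IsAlgClosed F] [CharZero F]
    (χ : C →+* F) {l : ℕ} (hl : 0 < l) (hτ : ∀ a, τ^[l] a = a) (hW : W ^ l = 1)
    (hχ : IsPrimitiveRoot (χ W) l) (hT : ∀ a j, χ (τ^[j] (twistedDiff τ W l a)) = 0) :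
    Set.InjOn (fun j => χ (skewProd τ W j)) (Set.Iio l) := by
  set D : ℕ → F := fun j => χ (skewProd τ W j) with hDdef
  have hDl : ∀ j, D j ^ l = 1 := fun j => by
    rw [hDdef, ← map_pow, skewProd_pow_eq_one τ W hW, map_one]
  have hDne : ∀ j, D j ≠ 0 := fun j h => by
    have := hDl j
    rw [h, zero_pow hl.ne'] at this
    exact zero_ne_one this
  have hDadd : ∀ j k, D (j + k) = χ (τ^[j] (skewProd τ W k)) * D j := fun j k => by
    simp only [hDdef, skewProd_add τ W j k, map_mul]
  let hat : C → ℕ → F := fun a j => χ (τ^[j] a)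
  have hDsucc : ∀ j, D (j + 1) = hat W j * D j := fun j => by
    rw [hDadd]; simp [skewProd, hat]
  have hstep : ∀ a k, weightedDiff D (hat a * D ^ k) = hat (a - W ^ k * τ a) * D ^ (k + 1) := by
    intro a k
    ext j
    change (hat a j * D j ^ k - hat a (j + 1) * D (j + 1) ^ k) * D j =
      hat (a - W ^ k * τ a) j * D j ^ (k + 1)
    rw [hDsucc]
    simp only [hat, iterate_map_sub, iterate_map_mul, iterate_map_pow, map_sub, map_mul, map_pow,
      Function.iterate_succ_apply]
    ring
  have hDpow : D ^ l = 1 := funext hDl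
  have hzero : ∀ a, ((weightedDiff D)^[l]) (hat a) = 0 := by
    intro a
    have : ∀ m, ((weightedDiff D)^[m]) (hat a) = hat (twistedDiff τ W m a) * D ^ m := by
      intro m
      induction m with
      | zero => simp [twistedDiff]
      | succ m ih => rw [Function.iterate_succ_apply', ih, hstep, twistedDiff]
    rw [this]
    ext j
    simp [hat, hT]
  have hmon : ∀ a k, ((weightedDiff D)^[l * 2]) (hat a * D ^ k) = 0 := by
    intro a k
    have hshift : ∀ m a k, ∃ b, ((weightedDiff D)^[m]) (hat a * D ^ k) = hat b * D ^ (k + m) := by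
      intro m
      induction m with
      | zero => exact fun a k => ⟨a, by simp⟩
      | succ m ih =>
        intro a k
        obtain ⟨b, hb⟩ := ih (a - W ^ k * τ a) (k + 1)
        refine ⟨b, ?_⟩
        rw [Function.iterate_succ_apply, hstep, hb]
        congr 2; omega
    have hmodk : D ^ k = D ^ (k % l) := by
      conv_lhs => rw [← Nat.mod_add_div k l, pow_add, pow_mul, hDpow, one_pow, mul_one]
    have hlt := Nat.mod_lt k hl
    obtain ⟨b, hb⟩ := hshift (l - k % l) a (k % l)
    rw [hmodk, show l * 2 = k % l + (l + (l - k % l)) by omega, Function.iterate_add_apply,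
      Function.iterate_add_apply, hb, Nat.add_sub_cancel' hlt.le, hDpow, mul_one, hzero,
      iterate_map_zero]
  -- the sequences `hat a * D ^ k` form a multiplicative submonoid
  let M : Submonoid (ℕ → F) :=
    { carrier := {g | ∃ a k, g = hat a * D ^ k}
      one_mem' := ⟨1, 0, by ext j; simp [hat]⟩
      mul_mem' := by
        rintro _ _ ⟨a, k, rfl⟩ ⟨b, k', rfl⟩
        refine ⟨a * b, k + k', ?_⟩
        ext j
        simp only [hat, Pi.mul_apply, Pi.pow_apply, iterate_map_mul, map_mul]
        ring }
  have hadj : ∀ g ∈ Algebra.adjoin F (M : Set (ℕ → F)), ((weightedDiff D)^[l * 2]) g = 0 := by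
    intro g hg
    rw [← Subalgebra.mem_toSubmodule, Algebra.adjoin_eq_span, Submonoid.closure_eq] at hg
    induction hg using Submodule.span_induction with
    | mem x hx => obtain ⟨a, k, rfl⟩ := hx; exact hmon a k
    | zero => exact iterate_map_zero _ _
    | add x y _ _ hx hy => rw [iterate_map_add, hx, hy, add_zero]
    | smul c x _ hx =>
      rw [← Module.End.coe_pow] at hx ⊢
      rw [map_smul, hx, smul_zero]
  let σ : (ℕ → F) → ℕ → F := fun g j => g (j + 1)
  have hσ : ∀ n g j, σ^[n] g j = g (j + n) := by
    intro n
    induction n with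
    | zero => simp
    | succ n ih => intro g j; rw [Function.iterate_succ_apply, ih]; simp [σ, add_assoc]
  have hper : Function.IsPeriodicPt σ (l * l) D := by
    have hadd : ∀ m j, D (l * m + j) = D l ^ m * D j := by
      intro m
      induction m with
      | zero => simp
      | succ m ih =>
        intro j
        have : D (l + (l * m + j)) = D (l * m + j) * D l := by rw [hDadd, hτ]
        rw [show l * (m + 1) + j = l + (l * m + j) by ring, this, ih]
        ring
    ext j
    rw [hσ, add_comm, hadd, hDl, one_mul]
  set P := Function.minimalPeriod σ D with hPdef
  have hP : 0 < P := hper.minimalPeriod_pos (Nat.mul_pos hl hl)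
  have hDP : ∀ j, D (j + P) = D j := fun j => by
    rw [← hσ P D, hPdef, Function.iterate_minimalPeriod]
  let S : Subalgebra F (ℕ → F) := Algebra.adjoin F (Set.range fun k => σ^[k] D)
  have hSM : S ≤ Algebra.adjoin F (M : Set (ℕ → F)) := by
    refine Algebra.adjoin_mono ?_
    rintro _ ⟨k, rfl⟩
    refine ⟨skewProd τ W k, 1, ?_⟩
    ext j
    simp only [hσ, hDadd j k, hat, pow_one, Pi.mul_apply]
  have hSper : ∀ g ∈ S, ∀ j, g (j + P) = g j := by
    intro g hg
    induction hg using Algebra.adjoin_induction with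
    | mem x hx =>
      obtain ⟨k, rfl⟩ := hx
      intro j
      simp only [hσ]
      rw [add_right_comm, hDP]
    | algebraMap r => intro j; rfl
    | add x y _ _ hx hy => intro j; simp only [Pi.add_apply, hx, hy]
    | mul x y _ _ hx hy => intro j; simp only [Pi.mul_apply, hx, hy]
  have hSsep : ∀ i < P, ∀ j < P, i ≠ j → ∃ g ∈ S, g i ≠ g j := by
    intro i hi j hj hij
    by_contra! hcon
    refine hij (Function.iterate_injOn_Iio_minimalPeriod hi hj ?_)
    ext k
    have := hcon _ (Algebra.subset_adjoin ⟨k, rfl⟩)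
    simp only [hσ] at this
    change σ^[i] D k = σ^[j] D k
    rw [hσ, hσ, add_comm k i, add_comm k j, this]
  have hprod := prod_X_sub_C_eq_of_nilpotent hP hDP hDne (by simp [hDdef, skewProd])
    fun g hg => hadj g (hSM (Subalgebra.mem_of_periodic S P hSper hSsep g hg hP))
  have hD1 : D 1 = χ W := by simp [hDdef, skewProd]
  have hlP : l ∣ P := by
    refine hχ.dvd_of_pow_eq_one _ ?_
    have h := congrArg (Polynomial.eval (χ W)) hprod
    rw [Polynomial.eval_prod, prod_eq_zero (i := 1 % P) (mem_range.2 (Nat.mod_lt _ hP))] at h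
    · simpa [sub_eq_zero] using h.symm
    · have : D (1 % P) = D 1 := Function.Periodic.map_mod_nat hDP 1
      simp [this, hD1]
  have hsep : (∏ j ∈ range P, (Polynomial.X - Polynomial.C (D j))).Separable := by
    rw [hprod]
    exact Polynomial.separable_X_pow_sub_C (1 : F) (by exact_mod_cast hP.ne') one_ne_zero
  intro i hi j hj hij
  have hle := Nat.le_of_dvd hP hlP
  exact hsep.inj_of_prod_X_sub_C (mem_range.2 (lt_of_lt_of_le hi hle))
    (mem_range.2 (lt_of_lt_of_le hj hle)) hij

end Cyclic

/-- A family of commuting `l`-th roots of unity has joint spectral projections. -/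
theorem exists_spectral_family {C ι : Type*} [CommRing C] [Algebra ℂ C] [Fintype ι] [DecidableEq ι]
    (W : ι → C) {q : ℂ} {l : ℕ} (hl : 0 < l) (hq : IsPrimitiveRoot q l) (hW : ∀ i, W i ^ l = 1) :
    ∃ e : (ι → Fin l) → C, ∑ P, e P = 1 ∧
      ∀ P i, W i * e P = algebraMap ℂ C (q ^ (P i : ℕ)) * e P := by
  have hq0 : q ≠ 0 := hq.ne_zero hl.ne'
  have hlC : (l : ℂ) ≠ 0 := Nat.cast_ne_zero.2 hl.ne'
  let v : ι → Fin l → C := fun i j => (q⁻¹ ^ (j : ℕ)) • W i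
  let g : ι → Fin l → C := fun i j => (l : ℂ)⁻¹ • ∑ m ∈ range l, v i j ^ m
  have hv : ∀ i j, v i j ^ l = 1 := fun i j => by
    rw [smul_pow, hW, ← pow_mul, mul_comm, pow_mul, inv_pow, hq.pow_eq_one]; simp
  have hWv : ∀ i (j : Fin l), W i = algebraMap ℂ C (q ^ (j : ℕ)) * v i j := fun i j => by
    rw [← Algebra.smul_def, smul_smul, ← mul_pow, mul_inv_cancel₀ hq0, one_pow, one_smul]
  have hvg : ∀ i j, v i j * g i j = g i j := fun i j => by
    have := mul_geom_sum (v i j) l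
    rw [hv, sub_self, sub_mul, one_mul, sub_eq_zero] at this
    rw [mul_smul_comm, this]
  have hsum : ∀ i, ∑ j, g i j = 1 := fun i => by
    simp only [g, ← smul_sum]
    rw [sum_comm, sum_eq_single_of_mem 0 (mem_range.2 hl)]
    · simp only [pow_zero, sum_const, card_univ, Fintype.card_fin]
      rw [← Nat.cast_smul_eq_nsmul ℂ, smul_smul, inv_mul_cancel₀ hlC, one_smul]
    · intro m hm hm0
      simp only [v, smul_pow, ← sum_smul]
      have h1 : (q⁻¹ ^ m) ^ l = 1 := by
        rw [← pow_mul, mul_comm, pow_mul, inv_pow, hq.pow_eq_one]; simp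
      have h2 : q⁻¹ ^ m - 1 ≠ 0 := by
        rw [sub_ne_zero]
        exact hq.inv.pow_ne_one_of_pos_of_lt hm0 (mem_range.1 hm)
      have h3 := mul_geom_sum (q⁻¹ ^ m) l
      rw [h1, sub_self, mul_eq_zero] at h3
      have h4 : ∑ j : Fin l, (q⁻¹ ^ (j : ℕ)) ^ m = 0 := by
        rw [Fin.sum_univ_eq_sum_range (fun j => (q⁻¹ ^ j) ^ m), ← h3.resolve_left h2]
        exact sum_congr rfl fun j _ => by rw [← pow_mul, ← pow_mul, mul_comm]
      rw [h4, zero_smul]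
  refine ⟨fun P => ∏ i, g i (P i), ?_, fun P i => ?_⟩
  · rw [← Fintype.prod_sum]
    exact prod_eq_one fun i _ => hsum i
  · change W i * ∏ i, g i (P i) = algebraMap ℂ C (q ^ (P i : ℕ)) * ∏ i, g i (P i)
    rw [← mul_prod_erase univ (fun i => g i (P i)) (mem_univ i), ← mul_assoc, ← mul_assoc,
      hWv i (P i), mul_assoc (algebraMap ℂ C _), hvg]

/-- The projection onto the part where all conjugates of `q` under `τc` agree. -/
theorem exists_fixed_projection {C : Type*} [CommRing C] [Algebra ℂ C] (τc : C →+* C)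
    {q : ℂ} {l : ℕ} (hl : 0 < l) (hq : IsPrimitiveRoot q l)
    (hτl : ∀ c, τc^[l] c = c) :
    ∃ f : C, τc f = f ∧ f * f = f ∧ (∀ k, τc^[k] (algebraMap ℂ C q) * f = algebraMap ℂ C q * f) ∧
      1 - f ∈ Ideal.span (Set.range fun k => τc^[k] (algebraMap ℂ C q) - algebraMap ℂ C q) := by
  set W : ℕ → C := fun k => τc^[k] (algebraMap ℂ C q) with hWdef
  have hW0 : W 0 = algebraMap ℂ C q := rfl
  have hWl : ∀ k, W k ^ l = 1 := fun k => by
    rw [hWdef, ← iterate_map_pow, ← map_pow, hq.pow_eq_one, map_one, iterate_map_one]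
  have hWmod : ∀ k, W (k % l) = W k := Function.Periodic.map_mod_nat fun k => by
    simp only [hWdef, Function.iterate_add_apply, hτl]
  have hWs : ∀ k, τc (W k) = W (k + 1) := fun k => (Function.iterate_succ_apply' _ _ _).symm
  obtain ⟨e, hsum, he⟩ := exists_spectral_family (fun i : Fin l => W i) hl hq fun i => hWl i
  set J := Ideal.span (Set.range fun k => W k - W 0) with hJ
  let o : Fin l := ⟨0, hl⟩
  classical
  set f : C := ∑ P with ∀ i, P i = P o, e P with hf
  have hWf : ∀ k, W k * f = W 0 * f := by
    intro k
    rw [hf, mul_sum, mul_sum]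
    refine sum_congr rfl fun P hP => ?_
    have hP' := (mem_filter.1 hP).2
    have h1 := he P ⟨k % l, Nat.mod_lt _ hl⟩
    have h2 := he P o
    rw [hP'] at h1
    rw [← hWmod k]
    exact h1.trans h2.symm
  have hfJ : 1 - f ∈ J := by
    rw [← hsum, ← sum_filter_add_sum_filter_not univ (fun P : Fin l → Fin l => ∀ i, P i = P o),
      ← hf, add_sub_cancel_left]
    refine J.sum_mem fun P hP => ?_
    obtain ⟨i, hi⟩ := not_forall.1 (mem_filter.1 hP).2
    have hne : q ^ (P i : ℕ) - q ^ (P o : ℕ) ≠ 0 := by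
      rw [sub_ne_zero]
      exact fun h => hi (Fin.ext (hq.pow_inj (P i).2 (P o).2 h))
    have h : (W i - W 0) * e P = algebraMap ℂ C (q ^ (P i : ℕ) - q ^ (P o : ℕ)) * e P := by
      rw [sub_mul, map_sub, sub_mul, ← he P i, ← he P o]
    have h' : e P = algebraMap ℂ C (q ^ (P i : ℕ) - q ^ (P o : ℕ))⁻¹ * e P * (W i - W 0) := by
      rw [mul_assoc, mul_comm (e P), h, ← mul_assoc, ← map_mul, inv_mul_cancel₀ hne, map_one,
        one_mul]
    rw [h']
    exact J.mul_mem_left _ (Ideal.subset_span ⟨i, rfl⟩)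
  have hann : ∀ c, (∀ k, W k * c = W 0 * c) → f * c = c := by
    intro c hc
    have hle : J ≤ Ideal.torsionOf C C c := by
      rw [hJ, Ideal.span_le]
      rintro _ ⟨k, rfl⟩
      simp [sub_mul, hc]
    have := hle hfJ
    rw [Ideal.mem_torsionOf_iff, smul_eq_mul, sub_mul, one_mul, sub_eq_zero] at this
    exact this.symm
  have hτf : ∀ k, W k * τc f = W 0 * τc f := by
    have h1 : ∀ k, W (k + 1) * τc f = W 1 * τc f := fun k => by
      rw [← hWs, ← map_mul, hWf, map_mul, hWs]
    have h0 : W 0 * τc f = W 1 * τc f := by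
      have : W (l - 1 + 1) = W 0 := by rw [Nat.sub_add_cancel hl, ← hWmod l, Nat.mod_self]
      rw [← this, h1]
    rintro (_ | k)
    · rfl
    · rw [h1, h0]
  have hff : f * τc f = f := by
    have hle' : J ≤ (Ideal.torsionOf C C f).comap τc := by
      rw [hJ, Ideal.span_le]
      rintro _ ⟨k, rfl⟩
      simp [sub_mul, hWs, hWf]
    have hmap : J.map τc ≤ Ideal.torsionOf C C f := Ideal.map_le_iff_le_comap.2 hle'
    have := hmap (Ideal.mem_map_of_mem τc hfJ)
    rw [Ideal.mem_torsionOf_iff, smul_eq_mul, map_sub, map_one, sub_mul, one_mul, sub_eq_zero] at this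
    rw [mul_comm, ← this]
  exact ⟨f, (hann _ hτf).symm.trans hff, hann f hWf, hWf, hfJ⟩

section Inner

variable {C A : Type*} [CommRing C] [Ring A] [Algebra C A]
  {τ : A →+* A} {τc : C →+* C}

theorem map_smul_of_compatible (hτc : ∀ c : C, τ (algebraMap C A c) = algebraMap C A (τc c))
    (c : C) (a : A) : τ (c • a) = τc c • τ a := by
  rw [Algebra.smul_def, map_mul, hτc, ← Algebra.smul_def]

/-- A skew derivation becomes inner after multiplication by an element of the ideal of
differences of the conjugates of a central element. -/
theorem exists_inner_of_mem_span (hτc : ∀ c : C, τ (algebraMap C A c) = algebraMap C A (τc c))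
    (δ : A →+ A) (hδ : ∀ a b, δ (a * b) = δ a * b + τ a * δ b) (W : C) {g : C}
    (hg : g ∈ Ideal.span (Set.range fun k => τc^[k] W - W)) :
    ∃ d : A, ∀ a, g • δ a = d * a - τ a * d := by
  let I : Ideal C :=
    { carrier := {c | ∃ d : A, ∀ a, c • δ a = d * a - τ a * d}
      zero_mem' := ⟨0, fun a => by simp⟩
      add_mem' := by
        rintro c c' ⟨d, hd⟩ ⟨d', hd'⟩
        exact ⟨d + d', fun a => by rw [add_smul, hd, hd', add_mul, mul_add]; abel⟩
      smul_mem' := by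
        rintro b c ⟨d, hd⟩
        exact ⟨b • d, fun a => by
          rw [smul_eq_mul, mul_smul, hd, smul_sub, smul_mul_assoc, mul_smul_comm]⟩ }
  have hstep : ∀ c : C, τc c - c ∈ I := fun c => by
    refine ⟨- δ (algebraMap C A c), fun a => ?_⟩
    have h := congrArg δ (Algebra.commutes c a)
    rw [hδ, hδ, hτc, ← Algebra.smul_def, ← Algebra.commutes, ← Algebra.smul_def] at h
    rw [sub_smul, neg_mul, mul_neg, sub_neg_eq_add, sub_eq_iff_eq_add]
    rw [← sub_eq_zero] at h ⊢
    rw [← h]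
    abel
  have hle : Ideal.span (Set.range fun k => τc^[k] W - W) ≤ I := by
    rw [Ideal.span_le]
    rintro _ ⟨k, rfl⟩
    change τc^[k] W - W ∈ I
    induction k with
    | zero => simp
    | succ k ih =>
      have := I.add_mem (hstep (τc^[k] W)) ih
      rwa [sub_add_sub_cancel, ← Function.iterate_succ_apply' τc] at this
  exact hle hg

/-- If `d` is a `q`-eigenvector of `τ` whose inner skew derivation has vanishing `l`-th power,
then `d ^ l` is central. -/
theorem commute_pow_of_inner_nilpotent [Algebra ℂ C]
    (hτc : ∀ c : C, τ (algebraMap C A c) = algebraMap C A (τc c))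
    {q : ℂ} {l : ℕ} (hl : 0 < l) (hq : IsPrimitiveRoot q l)
    (hτcl : ∀ c, τc^[l] c = c) (hτl : ∀ a, τ^[l] a = a) {d : A}
    (hd : τ d = algebraMap ℂ C q • d)
    (hnil : ∀ a, (fun b => d * b - τ b * d)^[l] a = 0) (a : A) :
    d ^ l * a = a * d ^ l := by
  have hsm := map_smul_of_compatible hτc
  set W : C := algebraMap ℂ C q with hWdef
  set D : A → A := fun b => d * b - τ b * d with hD
  have hWl : W ^ l = 1 := by rw [hWdef, ← map_pow, hq.pow_eq_one, map_one]
  have hdpow : ∀ m, τ (d ^ m) = W ^ m • d ^ m := fun m => by rw [map_pow, hd, smul_pow]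
  -- central elements whose product with `d ^ l` vanishes
  have hTd : ∀ c m, D^[m] (algebraMap C A c) = twistedDiff τc W m c • d ^ m := by
    intro c m
    induction m with
    | zero => simp [twistedDiff, Algebra.algebraMap_eq_smul_one]
    | succ m ih =>
      rw [Function.iterate_succ_apply', ih, hD]
      change d * _ - τ _ * d = _
      rw [hsm, hdpow, mul_smul_comm, ← pow_succ', smul_smul, smul_mul_assoc, ← pow_succ, ← sub_smul,
        twistedDiff, mul_comm (W ^ m)]
  have hTj : ∀ c j, τc^[j] (twistedDiff τc W l c) • d ^ l = 0 := by
    intro c j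
    induction j with
    | zero => rw [Function.iterate_zero_apply, ← hTd, hnil]
    | succ j ih =>
      have := congrArg τ ih
      rwa [hsm, hdpow, hWl, one_smul, map_zero, ← Function.iterate_succ_apply' τc] at this
  -- expansion of the iterated inner derivation
  set Y : A → A := fun b => -(τ b * d) with hY
  set N : ℕ → C := skewProd τc W with hN
  have hYadd : ∀ k b c, Y^[k] (b + c) = Y^[k] b + Y^[k] c := by
    intro k
    induction k with
    | zero => intro b c; rfl
    | succ k ih =>
      intro b c
      simp only [Function.iterate_succ_apply']
      rw [ih]
      simp only [hY, map_add, add_mul, neg_add]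
  have hYd : ∀ k b, Y^[k] (d * b) = N k • (d * Y^[k] b) := by
    intro k b
    induction k with
    | zero => simp [hN, skewProd]
    | succ k ih =>
      rw [Function.iterate_succ_apply', ih, Function.iterate_succ_apply']
      simp only [hY, hN, skewProd]
      rw [hsm, map_mul, hd, mul_comm W, mul_smul, smul_mul_assoc, smul_mul_assoc, smul_mul_assoc,
        mul_neg, smul_neg, smul_neg, mul_assoc]
  have hexp : ∀ m b, D^[m] b =
      ∑ k ∈ range (m + 1), newtonCoeff N m k • (d ^ (m - k) * Y^[k] b) := by
    intro m
    induction m with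
    | zero => simp [newtonCoeff]
    | succ m ih =>
      intro b
      rw [sum_newtonCoeff_succ, Function.iterate_succ_apply, ih]
      refine sum_congr rfl fun k hk => ?_
      have hkm : k ≤ m := Nat.lt_succ_iff.1 (mem_range.1 hk)
      have : D b = d * b + Y b := by rw [hD, hY]; exact sub_eq_add_neg _ _
      rw [this, hYadd, hYd, mul_add, mul_smul_comm, ← mul_assoc, ← pow_succ,
        ← Function.iterate_succ_apply Y, Nat.succ_sub hkm, Nat.succ_sub_succ]
  have hYτ : ∀ k b, Y^[k] b = τ^[k] b * Y^[k] 1 := by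
    intro k b
    induction k with
    | zero => simp
    | succ k ih =>
      rw [Function.iterate_succ_apply', ih, Function.iterate_succ_apply' Y,
        Function.iterate_succ_apply' τ]
      simp only [hY]
      rw [map_mul, mul_assoc, mul_neg]
  -- reduction to one spectral component
  obtain ⟨e, hsum, he⟩ := exists_spectral_family (fun i : Fin l => τc^[i] W) hl hq fun i => by
    rw [← iterate_map_pow, hWl, iterate_map_one]
  suffices h : ∀ P, e P • (d ^ l * a - a * d ^ l) = 0 by
    rw [← sub_eq_zero, ← one_smul C (d ^ l * a - a * d ^ l), ← hsum, sum_smul]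
    exact sum_eq_zero fun P _ => h P
  intro P
  by_contra hne
  have hN_scalar : ∀ j, ∃ m : ℂ, N j * e P = algebraMap ℂ C m * e P := by
    intro j
    induction j with
    | zero => exact ⟨1, by simp [hN, skewProd]⟩
    | succ j ih =>
      obtain ⟨m, hm⟩ := ih
      have hj : τc^[j % l] W = τc^[j] W := Function.Periodic.map_mod_nat
        (f := fun k => τc^[k] W) (fun k => by simp only [Function.iterate_add_apply, hτcl]) j
      have hej := he P ⟨j % l, Nat.mod_lt _ hl⟩
      refine ⟨q ^ (P ⟨j % l, Nat.mod_lt _ hl⟩ : ℕ) * m, ?_⟩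
      simp only [hj] at hej
      have hN1 : skewProd τc W 1 = W := by simp [skewProd]
      rw [hN, skewProd_add, hN1, mul_assoc, ← hN, hm, mul_left_comm, hej, map_mul]
      ring
  choose n hn using hN_scalar
  have hproper : Ideal.torsionOf C A (e P • (d ^ l * a - a * d ^ l)) ≠ ⊤ := by
    rwa [Ne, Ideal.torsionOf_eq_top_iff]
  obtain ⟨𝔪, hmax, hle⟩ := Ideal.exists_le_maximal _ hproper
  let _ : Field (C ⧸ 𝔪) := Ideal.Quotient.field 𝔪
  let χ : C →+* AlgebraicClosure (C ⧸ 𝔪) := (algebraMap _ _).comp (Ideal.Quotient.mk 𝔪)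
  have hχ0 : ∀ c, c • (e P • (d ^ l * a - a * d ^ l)) = 0 → χ c = 0 := fun c hc => by
    have : Ideal.Quotient.mk 𝔪 c = 0 := Ideal.Quotient.eq_zero_iff_mem.2 (hle hc)
    simp only [χ, RingHom.comp_apply, this, map_zero]
  let ψ : ℂ →+* AlgebraicClosure (C ⧸ 𝔪) := χ.comp (algebraMap ℂ C)
  have : CharZero (AlgebraicClosure (C ⧸ 𝔪)) := charZero_of_injective_ringHom ψ.injective
  have hinj : Set.InjOn (fun j => χ (N j)) (Set.Iio l) := by
    refine injOn_skewProd_of_twistedDiff τc W χ hl hτcl hWl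
      (hq.map_of_injective (f := ψ) ψ.injective) fun c j => hχ0 _ ?_
    rw [smul_comm, smul_sub, ← smul_mul_assoc, ← mul_smul_comm, hTj]
    simp
  have hχn : ∀ j, χ (N j) = ψ (n j) := fun j => by
    rw [← sub_eq_zero]
    change χ (N j) - χ (algebraMap ℂ C (n j)) = 0
    rw [← map_sub]
    refine hχ0 _ ?_
    rw [smul_smul, sub_mul, hn, sub_self, zero_smul]
  have hcoeff : ∀ k, 0 < k → k < l → newtonCoeff N l k * e P = 0 := by
    intro k hk hkl
    have hz : newtonCoeff n l k = 0 := by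
      refine newtonCoeff_eq_zero_of_injOn n (fun j => ψ.injective ?_) (ψ.injective ?_) ?_ hk hkl
      · rw [map_pow, ← hχn, ← map_pow, hN, skewProd_pow_eq_one τc W hWl, map_one, map_one]
      · rw [← hχn, hN, skewProd, map_one, map_one]
      · intro i hi j hj hij
        refine hinj hi hj ?_
        simp only [hχn, hij]
    have hmk : ∀ j, Ideal.Quotient.mk (Ideal.torsionOf C C (e P)) (N j) =
        ((Ideal.Quotient.mk (Ideal.torsionOf C C (e P))).comp (algebraMap ℂ C)) (n j) := fun j => by
      rw [RingHom.comp_apply, Ideal.Quotient.eq, Ideal.mem_torsionOf_iff, smul_eq_mul, sub_mul, hn,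
        sub_self]
    have : Ideal.Quotient.mk (Ideal.torsionOf C C (e P)) (newtonCoeff N l k) = 0 := by
      rw [map_newtonCoeff]
      simp only [hmk]
      rw [← map_newtonCoeff, hz, map_zero]
    rw [Ideal.Quotient.eq_zero_iff_mem, Ideal.mem_torsionOf_iff] at this
    exact this
  have hfin : ∀ b, e P • (d ^ l * b + Y^[l] b) = 0 := by
    intro b
    have h := congrArg (e P • ·) (hnil b)
    simp only [hexp, smul_sum, smul_zero] at h
    rw [sum_eq_add_of_mem 0 l (by simp) (by simp) hl.ne fun k hk hk' => ?_] at h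
    · rw [smul_add]
      simpa [newtonCoeff_zero_right N (by simp [hN, skewProd]), newtonCoeff_self] using h
    · rw [smul_smul, mul_comm, hcoeff k (Nat.pos_of_ne_zero hk'.1)
        (lt_of_le_of_ne (Nat.lt_succ_iff.1 (mem_range.1 hk)) hk'.2), zero_smul]
  refine hne ?_
  have h1 := hfin 1
  have h2 := hfin a
  rw [hYτ, hτl, smul_add, ← mul_smul_comm (e P) a (Y^[l] 1)] at h2
  rw [mul_one, smul_add, add_comm, ← eq_neg_iff_add_eq_zero] at h1
  rw [h1, mul_neg, mul_smul_comm, ← sub_eq_add_neg, ← smul_sub] at h2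
  exact h2

end Inner

section OreExtension

variable {C A R : Type*} [CommRing C] [Ring A] [Algebra C A] [Ring R] [Algebra ℂ R]
  {τ : A →+* A} {δ : A →+ A} {τc : C →+* C}

theorem smul_eq_zero_of_mem_span {M : Type*} [AddCommGroup M] [Module C M] {S : Set C} {g : C}
    {z : M} (hg : g ∈ Ideal.span S) (hS : ∀ c ∈ S, c • z = 0) : g • z = 0 :=
  (Ideal.span_le (I := Ideal.torsionOf C M z)).2 hS hg

/-- The complement of a `τ`-fixed projection carries an inner part of a `q`-skew derivation. -/
theorem exists_inner_part [Algebra ℂ C]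
    (hτc : ∀ c : C, τ (algebraMap C A c) = algebraMap C A (τc c))
    (hδ : ∀ a b, δ (a * b) = δ a * b + τ a * δ b) {q : ℂ} {l : ℕ} (hl : 0 < l)
    (hq : IsPrimitiveRoot q l) (hτcl : ∀ c, τc^[l] c = c) (hτl : ∀ a, τ^[l] a = a)
    (hτs : Function.Surjective τ) (hskew : ∀ a, τ (δ a) = algebraMap ℂ C q • δ (τ a))
    (hnil : ∀ a, δ^[l] a = 0) {f : C} (hτf : τc f = f) (hff : f * f = f)
    (hδf : ∀ b, δ (f • b) = f • δ b)
    (hf : 1 - f ∈ Ideal.span (Set.range fun k => τc^[k] (algebraMap ℂ C q) - algebraMap ℂ C q)) :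
    ∃ d : A, f • d = 0 ∧ (∀ a, (1 - f) • δ a = d * a - τ a * d) ∧
      τ d = algebraMap ℂ C q • d ∧ ∀ a, d ^ l * a = a * d ^ l := by
  have hsm := map_smul_of_compatible hτc
  set W : C := algebraMap ℂ C q
  obtain ⟨d', hd'⟩ := exists_inner_of_mem_span hτc δ hδ W hf
  have hidem : (1 - f) * (1 - f) = 1 - f := by linear_combination hff
  have hfg : f * (1 - f) = 0 := by linear_combination - hff
  set d : A := (1 - f) • d' with hd_def
  have hfd : f • d = 0 := by rw [hd_def, smul_smul, hfg, zero_smul]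
  have hd : ∀ a, (1 - f) • δ a = d * a - τ a * d := fun a => by
    rw [hd_def, smul_mul_assoc, mul_smul_comm, ← smul_sub, ← hd', smul_smul, hidem]
  have hτd : τ d = W • d := by
    set z : A := τ d - W • d with hz
    have hzb : ∀ b, z * b = τ b * z := by
      intro b
      obtain ⟨a, rfl⟩ := hτs b
      have h := congrArg τ (hd a)
      rw [hsm, map_sub, map_one, hτf, hskew, smul_comm, hd, map_sub, map_mul, map_mul, smul_sub]
        at h
      rw [hz, sub_mul, mul_sub, smul_mul_assoc, mul_smul_comm]
      rw [← sub_eq_zero] at h ⊢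
      rw [← neg_eq_zero, ← h]
      abel
    have hzc : ∀ c : C, τc c • z = c • z := fun c => by
      rw [Algebra.smul_def, ← hτc, ← hzb, ← Algebra.commutes, ← Algebra.smul_def]
    have hzk : ∀ k, τc^[k] W • z = W • z := by
      intro k
      induction k with
      | zero => rfl
      | succ k ih => rw [Function.iterate_succ_apply', hzc, ih]
    have h1 : (1 - f) • z = 0 := smul_eq_zero_of_mem_span hf <| by
      rintro _ ⟨k, rfl⟩
      rw [sub_smul, hzk, sub_self]
    have h2 : f • z = 0 := by
      have h := congrArg τ hfd
      rw [hsm, hτf, map_zero] at h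
      rw [hz, smul_sub, h, smul_comm, hfd, smul_zero, sub_zero]
    rw [sub_smul, one_smul, h2, sub_zero] at h1
    exact sub_eq_zero.1 h1
  refine ⟨d, hfd, hd, hτd, commute_pow_of_inner_nilpotent hτc hl hq hτcl hτl hτd fun a => ?_⟩
  have hiter : ∀ m, (fun b => d * b - τ b * d)^[m + 1] a = (1 - f) • δ^[m + 1] a := by
    intro m
    induction m with
    | zero => exact (hd a).symm
    | succ m ih =>
      rw [Function.iterate_succ_apply', ih, Function.iterate_succ_apply' δ (m + 1)]
      have hδg : ∀ b, δ ((1 - f) • b) = (1 - f) • δ b := fun b => by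
        rw [sub_smul, one_smul, map_sub, hδf, sub_smul, one_smul]
      rw [← hd, hδg, smul_smul, hidem]
  obtain ⟨m, rfl⟩ := Nat.exists_eq_succ_of_ne_zero hl.ne'
  rw [hiter, hnil, smul_zero]

/-- The complementary part of `x ^ l` agrees with the `l`-th power of the inner part. -/
theorem compl_mul_pow_eq_inner_pow [Algebra ℂ C] (φ : A →+* R) {x : R} {q : ℂ} {l : ℕ} (hl : 0 < l)
    (hq : IsPrimitiveRoot q l) (hx : ∀ a, x * φ a = φ (τ a) * x + φ (δ a))
    (hφq : φ (algebraMap C A (algebraMap ℂ C q)) = algebraMap ℂ R q)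
    (hτc : ∀ c : C, τ (algebraMap C A c) = algebraMap C A (τc c)) (hτcl : ∀ c, τc^[l] c = c)
    {f : C} (hff : f * f = f) (hfx : Commute (φ (algebraMap C A f)) x)
    (hf : 1 - f ∈ Ideal.span (Set.range fun k => τc^[k] (algebraMap ℂ C q) - algebraMap ℂ C q))
    {d : A} (hfd : f • d = 0) (hd : ∀ a, (1 - f) • δ a = d * a - τ a * d)
    (hτd : τ d = algebraMap ℂ C q • d) :
    φ (algebraMap C A (1 - f)) * x ^ l = φ (d ^ l) := by
  set W : C := algebraMap ℂ C q
  set i : C →+* R := φ.comp (algebraMap C A) with hi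
  have hia : ∀ c a, Commute (i c) (φ a) := fun c a => by
    rw [commute_iff_eq, hi, RingHom.comp_apply, ← map_mul, Algebra.commutes, map_mul]
  have hiW : ∀ r, Commute (i W) r := fun r => by
    change i W = algebraMap ℂ R q at hφq
    rw [hφq]
    exact Algebra.commutes q r
  set G : R := i (1 - f) with hG
  have hGx : Commute G x := by
    rw [hG, map_sub, map_one]
    exact (Commute.one_left x).sub_left hfx
  have hGG : G * G = G := by
    rw [hG, ← map_mul]
    congr 1
    linear_combination hff
  set y : R := G * x - φ d with hy
  have hya : ∀ a, y * φ a = φ (τ a) * y := fun a => by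
    have h : G * φ (δ a) = φ d * φ a - φ (τ a) * φ d := by
      rw [← map_mul, ← map_mul, ← map_sub, ← hd, Algebra.smul_def, map_mul]
      rfl
    rw [hy, sub_mul, mul_assoc, hx, mul_add, h, mul_sub, ← mul_assoc, (hia _ _).eq, mul_assoc]
    abel
  have hyc : ∀ k c, y ^ k * i c = i (τc^[k] c) * y ^ k := by
    intro k
    induction k with
    | zero => intro c; simp
    | succ k ih =>
      intro c
      rw [pow_succ, mul_assoc, hi, RingHom.comp_apply, hya, hτc, ← mul_assoc]
      change y ^ k * i (τc c) * y = _
      rw [ih, mul_assoc, Function.iterate_succ_apply, ← hi]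
  have hyl : y ^ l = 0 := by
    let _ : Module C R := Module.compHom R i
    have hsmul : ∀ (c : C) (r : R), c • r = i c * r := fun _ _ => rfl
    have h1 : (1 - f) • y ^ l = 0 := smul_eq_zero_of_mem_span hf <| by
      rintro _ ⟨k, rfl⟩
      have hk : τc^[k % l] W = τc^[k] W := Function.Periodic.map_mod_nat
        (f := fun k => τc^[k] W) (fun k => by simp only [Function.iterate_add_apply, hτcl]) k
      have hle : k % l ≤ l := (Nat.mod_lt _ hl).le
      have h := hyc (k % l) W
      rw [← (hiW _).eq, hk] at h
      rw [hsmul, map_sub, sub_mul, ← Nat.add_sub_cancel' hle, pow_add, ← mul_assoc, ← mul_assoc, h,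
        sub_self]
    have h2 : i f * y = 0 := by
      have hfG : i f * G = 0 := by
        rw [hG, ← map_mul, mul_sub, mul_one, hff, sub_self, map_zero]
      have hfφ : i f * φ d = 0 := by
        rw [hi, RingHom.comp_apply, ← map_mul, ← Algebra.smul_def, hfd, map_zero]
      rw [hy, mul_sub, ← mul_assoc, hfG, hfφ, zero_mul, sub_zero]
    have h3 : i f * y ^ l = 0 := by
      obtain ⟨m, rfl⟩ := Nat.exists_eq_succ_of_ne_zero hl.ne'
      rw [pow_succ', ← mul_assoc, h2, zero_mul]
    rwa [hsmul, map_sub, map_one, sub_mul, one_mul, h3, sub_zero] at h1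
  have hyd : y * φ d = q • (φ d * y) := by
    rw [hya, hτd, Algebra.smul_def, map_mul, hφq, ← Algebra.smul_def, smul_mul_assoc]
  have h := add_pow_of_qCommute hl hq hyd
  rw [hyl, add_zero, hy, add_sub_cancel, hGx.mul_pow, IsIdempotentElem.pow_eq hGG hl.ne'] at h
  rw [map_pow]
  exact h

/-- The `q`-binomial expansion of `x ^ l` at a primitive root of unity, on the part where `q`
is fixed by `τ`. -/
theorem fixed_mul_pow_mul (φ : A →+* R) {x F : R} {q : ℂ} {l : ℕ} (hl : 0 < l)
    (hq : IsPrimitiveRoot q l) (hx : ∀ a, x * φ a = φ (τ a) * x + φ (δ a)) (hFx : Commute F x)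
    (hskew : ∀ k b, F * φ (τ (δ^[k] b)) = q ^ k • (F * φ (δ^[k] (τ b))))
    (hnil : ∀ a, δ^[l] a = 0) (a : A) :
    F * (x ^ l * φ a) = F * (φ (τ^[l] a) * x ^ l) := by
  have hexp : ∀ m, F * (x ^ m * φ a) = ∑ k ∈ range (m + 1), newtonCoeff (fun j => q ^ j) m k •
      (F * (φ (δ^[k] (τ^[m - k] a)) * x ^ (m - k))) := by
    intro m
    induction m with
    | zero => simp [newtonCoeff]
    | succ m ih =>
      rw [sum_newtonCoeff_succ, pow_succ', mul_assoc, ← mul_assoc, hFx.eq, mul_assoc, ih, mul_sum]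
      refine sum_congr rfl fun k hk => ?_
      have hkm : k ≤ m := Nat.lt_succ_iff.1 (mem_range.1 hk)
      rw [mul_smul_comm, ← mul_assoc x F, ← hFx.eq, mul_assoc F x, ← mul_assoc x, hx, add_mul,
        mul_add, mul_assoc _ x, ← pow_succ', ← mul_assoc F, hskew, smul_mul_assoc, mul_assoc F,
        ← Function.iterate_succ_apply' τ, ← Function.iterate_succ_apply' δ, Nat.succ_sub_succ,
        Nat.succ_sub hkm]
  rw [hexp, sum_eq_add_of_mem 0 l (by simp) (by simp) hl.ne fun k hk hk' => ?_]
  · simp [newtonCoeff_zero_right, newtonCoeff_self, hnil]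
  · rw [newtonCoeff_pow_eq_zero hq (Nat.pos_of_ne_zero hk'.1)
      (lt_of_le_of_ne (Nat.lt_succ_iff.1 (mem_range.1 hk)) hk'.2), zero_smul]

/-- In an Ore extension with a `q`-skew derivation whose `l`-th power vanishes and an automorphism
of order dividing `l`, the power `x ^ l` commutes with the coefficients. -/
theorem pow_mul_eq_of_qSkew [Algebra ℂ C] (φ : A →+* R) (hφ : Function.Injective φ) {x : R} {q : ℂ}
    {l : ℕ} (hl : 0 < l) (hq : IsPrimitiveRoot q l)
    (hx : ∀ a, x * φ a = φ (τ a) * x + φ (δ a))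
    (hφq : φ (algebraMap C A (algebraMap ℂ C q)) = algebraMap ℂ R q)
    (hτc : ∀ c : C, τ (algebraMap C A c) = algebraMap C A (τc c)) (hτcl : ∀ c, τc^[l] c = c)
    (hτl : ∀ a, τ^[l] a = a) (hτs : Function.Surjective τ)
    (hδ : ∀ a b, δ (a * b) = δ a * b + τ a * δ b)
    (hskew : ∀ a, τ (δ a) = algebraMap ℂ C q • δ (τ a)) (hnil : ∀ a, δ^[l] a = 0) (a : A) :
    x ^ l * φ a = φ a * x ^ l := by
  obtain ⟨f, hτf, hff, hfW, hf⟩ := exists_fixed_projection τc hl hq hτcl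
  set W : C := algebraMap ℂ C q
  have hδf0 : δ (algebraMap C A f) = 0 := by
    have h := congrArg (fun c => δ (algebraMap C A c)) hff
    simp only [map_mul] at h
    rw [hδ, hτc, hτf, ← Algebra.commutes, ← Algebra.smul_def] at h
    have h0 := congrArg (f • ·) h
    simp only [smul_add, smul_smul, hff] at h0
    rw [add_eq_left] at h0
    rw [← h, h0, add_zero]
  have hδf : ∀ b, δ (f • b) = f • δ b := fun b => by
    rw [Algebra.smul_def, hδ, hδf0, zero_mul, zero_add, hτc, hτf, ← Algebra.smul_def]
  have hfx : Commute (φ (algebraMap C A f)) x := by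
    rw [commute_iff_eq, hx, hτc, hτf, hδf0, map_zero, add_zero]
  have hτfW : τc (W * f) = W * f := by
    rw [map_mul, hτf]
    exact hfW 1
  have hδfW0 : δ (algebraMap C A (W * f)) = 0 := by
    apply hφ
    have h := hx (algebraMap C A (W * f))
    rw [hτc, hτfW, map_mul, map_mul, hφq, ← mul_assoc, ← Algebra.commutes, mul_assoc, mul_assoc,
      hfx.eq, left_eq_add] at h
    rw [map_zero, map_mul, h]
  have hδfW : ∀ b, δ ((W * f) • b) = (W * f) • δ b := fun b => by
    rw [Algebra.smul_def, hδ, hδfW0, zero_mul, zero_add, hτc, hτfW, ← Algebra.smul_def]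
  have hδfWk : ∀ k b, δ ((W ^ k * f) • b) = (W ^ k * f) • δ b := by
    intro k
    induction k with
    | zero => simpa using hδf
    | succ k ih =>
      intro b
      have : W ^ (k + 1) * f = (W * f) * (W ^ k * f) := by
        linear_combination - W ^ (k + 1) * hff
      rw [this, mul_smul, hδfW, ih, ← mul_smul]
  have hskewk : ∀ k b, f • τ (δ^[k] b) = (W ^ k * f) • δ^[k] (τ b) := by
    intro k b
    induction k with
    | zero => simp
    | succ k ih =>
      rw [Function.iterate_succ_apply', hskew, smul_comm, ← hδf, ih, hδfWk, smul_smul,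
        Function.iterate_succ_apply', pow_succ', mul_assoc]
  obtain ⟨d, hfd, hd, hτd, hdl⟩ :=
    exists_inner_part hτc hδ hl hq hτcl hτl hτs hskew hnil hτf hff hδf hf
  have h1 := compl_mul_pow_eq_inner_pow φ hl hq hx hφq hτc hτcl hff hfx hf hfd hd hτd
  have h2 := fixed_mul_pow_mul φ hl hq hx hfx (fun k b => ?_) hnil a
  · have h3 : φ (algebraMap C A (1 - f)) * (x ^ l * φ a) =
        φ (algebraMap C A (1 - f)) * (φ a * x ^ l) := by
      rw [← mul_assoc, h1, ← map_mul, hdl, map_mul, ← h1, ← mul_assoc, ← mul_assoc, ← map_mul,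
        ← map_mul, Algebra.commutes]
    rw [map_sub, map_one, map_sub, map_one, sub_mul, sub_mul, h2, hτl, one_mul, one_mul,
      sub_left_inj] at h3
    exact h3
  · rw [← map_mul, ← Algebra.smul_def, hskewk, mul_smul, Algebra.smul_def, map_mul, map_pow, map_pow,
      hφq, ← map_pow, ← Algebra.smul_def, Algebra.smul_def f, map_mul]

end OreExtension

/-- in an Ore extension `R = A[x; τ, δ]` with `q`-skew condition
`τδ = ε^s δτ` at a primitive `l`-th root of unity `ε` with `gcd(l,s) = 1`, with `δ`
(locally) nilpotent so that `δ^l = 0` and `τ^l = id`, the element `x^l` satisfies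
`x^l a = τ^l(a) x^l` for all `a ∈ A` and is central in `R_ε`. -/
theorem stmt14 {R : Type*} [Ring R] [Algebra ℂ R] (A : Subalgebra ℂ R)
    (x : R) (τ δ : A → A)
    (hτadd : ∀ a b, τ (a + b) = τ a + τ b)
    (hτmul : ∀ a b, τ (a * b) = τ a * τ b)
    (hτone : τ 1 = 1)
    (hτbij : Function.Bijective τ)
    (hδadd : ∀ a b, δ (a + b) = δ a + δ b)
    (hδleib : ∀ a b, δ (a * b) = δ a * b + τ a * δ b)
    {l : ℕ} (hl : 0 < l) {ε : ℂ} (hε : IsPrimitiveRoot ε l)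
    (s : ℤ) (hs : s ≠ 0) (hcop : IsCoprime (l : ℤ) s)
    (hskew : ∀ a, τ (δ a) = ε ^ s • δ (τ a))
    (hore : ∀ a : A, x * (a : R) = (τ a : R) * x + (δ a : R))
    (hnil : ∀ a, δ^[l] a = 0)
    (hτl : τ^[l] = id)
    (hgen : Algebra.adjoin ℂ ((A : Set R) ∪ {x}) = ⊤) :
    (∀ a : A, x ^ l * (a : R) = ((τ^[l]) a : R) * x ^ l) ∧
      x ^ l ∈ Subalgebra.center ℂ R := by
  let t : A ≃+* A := RingEquiv.mk (Equiv.ofBijective τ hτbij) hτmul hτadd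
  let D : A →+ A := AddMonoidHom.mk' δ hδadd
  let tc : Subalgebra.center ℂ A →+* Subalgebra.center ℂ A := (Subring.centerCongr t).toRingHom
  let _ : Algebra (Subalgebra.center ℂ A) A :=
    (Subalgebra.center ℂ A).val.toRingHom.toAlgebra' fun c a =>
      (Subalgebra.mem_center_iff.1 c.2 a).symm
  have hq : IsPrimitiveRoot (ε ^ s) l :=
    hε.zpow_of_gcd_eq_one s (by rw [Int.gcd_comm]; exact Int.isCoprime_iff_gcd_eq_one.1 hcop)
  have htc : ∀ (k : ℕ) (c : Subalgebra.center ℂ A), ((tc^[k] c : Subalgebra.center ℂ A) : A) = τ^[k] c := by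
    intro k
    induction k with
    | zero => intro c; rfl
    | succ k ih => intro c; rw [Function.iterate_succ_apply, ih]; rfl
  have hcomm : ∀ a : A, x ^ l * (a : R) = (a : R) * x ^ l :=
    pow_mul_eq_of_qSkew (C := Subalgebra.center ℂ A) (τ := (t : A →+* A)) (δ := D) (τc := tc)
      (A.val : A →+* R) Subtype.val_injective hl hq hore rfl (fun c => rfl)
      (fun c => Subtype.ext <| (htc l c).trans (congrFun hτl c)) (congrFun hτl) hτbij.2 hδleib
      (fun a => (hskew a).trans (Algebra.smul_def _ _))
      hnil
  refine ⟨fun a => by rw [hτl]; exact hcomm a, ?_⟩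
  have hle : Algebra.adjoin ℂ ((A : Set R) ∪ {x}) ≤ Subalgebra.centralizer ℂ {x ^ l} := by
    rw [Algebra.adjoin_le_iff]
    rintro r (hr | rfl)
    · rintro _ rfl
      exact hcomm ⟨r, hr⟩
    · rintro _ rfl
      exact pow_mul_comm' _ _
  rw [hgen] at hle
  rw [Subalgebra.mem_center_iff]
  exact fun b => (hle (Algebra.mem_top (x := b)) _ rfl).symm
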